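/- If G and G' are connected graphs whose distance matrices have the same characteristic polynomial, and G is a complete k-partite graph K_{n_1,...,n_k} with k ≥ 2, then G' is isomorphic to G. In other words, complete multipartite graphs are determined by their distance spectra. -/

import Mathlib

open Polynomial

/-- The matrix `D + 2I` of a complete multipartite graph with part map `P`. -/
noncomputable def multiMat {V ι : Type*} [DecidableEq ι] (P : V → ι) : Matrix V V ℝ :=
  Matrix.of fun u v => if P u = P v then (2 : ℝ) else 1

/-- The size of a part. -/
def partSize {V ι : Type*} [Fintype V] [DecidableEq ι] (P : V → ι) (i : ι) : ℕ :=
  (Finset.univ.filter fun v => P v = i).card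

/-- The characteristic polynomial of the block diagonal part. -/
noncomputable def partPoly {V ι : Type*} [Fintype V] [Fintype ι] [DecidableEq ι]
    (P : V → ι) : ℝ[X] :=
  X ^ (Fintype.card V - Fintype.card ι) * ∏ i, (X - C (partSize P i : ℝ))

theorem multiMat_posSemidef {V ι : Type*} [Fintype V] [Fintype ι] [DecidableEq ι]
    (P : V → ι) : (multiMat P).PosSemidef := by
  classical
  let S : Matrix V ι ℝ := Matrix.of fun v i => if P v = i then 1 else 0
  let Z : Matrix V Unit ℝ := Matrix.of fun _ _ => 1
  have h : multiMat P = S * S.conjTranspose + Z * Z.conjTranspose := by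
    ext u v
    simp only [multiMat, S, Z, Matrix.add_apply, Matrix.mul_apply, Matrix.of_apply,
      Matrix.conjTranspose_apply]
    by_cases h : P u = P v
    · simp [h]; norm_num
    · simp [h, Ne.symm h]
  rw [h]
  exact (Matrix.posSemidef_self_mul_conjTranspose S).add
    (Matrix.posSemidef_self_mul_conjTranspose Z)

theorem det_small {ι : Type*} [Fintype ι] [DecidableEq ι] (n : ι → ℝ) (x : ℝ)
    (hx : ∀ i, x ≠ n i) :
    (x • (1 : Matrix ι ι ℝ) - Matrix.of fun i j => n j * (1 + if i = j then 1 else 0)).det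
      = (∏ i, (x - n i)) * (1 - ∑ i, n i / (x - n i)) := by
  have hx' : ∀ i, x - n i ≠ 0 := fun i => sub_ne_zero.mpr (hx i)
  have h : x • (1 : Matrix ι ι ℝ) - (Matrix.of fun i j => n j * (1 + if i = j then 1 else 0))
      = Matrix.diagonal (fun i => x - n i) *
        (1 + Matrix.replicateCol Unit (fun i => (x - n i)⁻¹) *
          Matrix.replicateRow Unit (fun i => - n i)) := by
    ext i j
    rw [Matrix.diagonal_mul]
    simp only [Matrix.sub_apply, Matrix.smul_apply, Matrix.one_apply, Matrix.of_apply,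
      Matrix.add_apply, Matrix.mul_apply, Matrix.replicateCol_apply, Matrix.replicateRow_apply,
      Finset.univ_unique, Finset.sum_singleton, smul_eq_mul]
    have := hx' i
    by_cases hij : i = j
    · subst hij; simp; field_simp; ring
    · simp [hij]; field_simp
  rw [h, Matrix.det_mul, Matrix.det_diagonal, Matrix.det_one_add_replicateCol_mul_replicateRow]
  congr 1
  simp [dotProduct, div_eq_mul_inv, sub_eq_add_neg]

theorem charpoly_multiMat_eval {V ι : Type*} [Fintype V] [DecidableEq V] [Fintype ι]
    [DecidableEq ι] (P : V → ι) (hP : Function.Surjective P) (x : ℝ) (h0 : x ≠ 0)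
    (hx : ∀ i, x ≠ partSize P i) :
    (multiMat P).charpoly.eval x =
      x ^ (Fintype.card V - Fintype.card ι) *
        ((∏ i, (x - partSize P i)) * (1 - ∑ i, (partSize P i : ℝ) / (x - partSize P i))) := by
  let S : Matrix V ι ℝ := Matrix.of fun v i => if P v = i then 1 else 0
  let W : Matrix ι V ℝ := Matrix.of fun i v => 1 + if P v = i then 1 else 0
  have h : multiMat P = S * W := by
    ext u v
    simp only [multiMat, S, W, Matrix.mul_apply, Matrix.of_apply]
    by_cases h : P u = P v
    · simp [h]; norm_num
    · simp [h, Ne.symm h]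
  have hW : W * S = Matrix.of fun i j => (partSize P j : ℝ) * (1 + if i = j then 1 else 0) := by
    ext i j
    simp only [S, W, Matrix.mul_apply, Matrix.of_apply, partSize]
    rw [← nsmul_eq_mul, ← Finset.sum_const, Finset.sum_filter]
    refine Finset.sum_congr rfl fun v _ => ?_
    by_cases h : P v = j
    · simp [h, eq_comm]
    · simp [h]
  have hcard : Fintype.card ι ≤ Fintype.card V := Fintype.card_le_of_surjective P hP
  rw [Matrix.eval_charpoly, ← det_small _ x hx, ← hW, h]
  have e1 : Matrix.scalar V x - S * W = x • (1 - (x⁻¹ • S) * W) := by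
    rw [smul_sub, Matrix.smul_mul, smul_smul, mul_inv_cancel₀ h0, one_smul]
    congr 1
    ext i j; simp [Matrix.diagonal_apply, Matrix.one_apply]
  have e2 : x • (1 : Matrix ι ι ℝ) - W * S = x • (1 - W * (x⁻¹ • S)) := by
    rw [smul_sub, Matrix.mul_smul, smul_smul, mul_inv_cancel₀ h0, one_smul]
  rw [e1, e2, Matrix.det_smul, Matrix.det_smul, Matrix.det_one_sub_mul_comm, ← mul_assoc,
    ← pow_add, Nat.sub_add_cancel hcard]

theorem partPoly_eval {V ι : Type*} [Fintype V] [Fintype ι]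
    [DecidableEq ι] (P : V → ι) (hP : Function.Surjective P) (x : ℝ) (h0 : x ≠ 0)
    (hx : ∀ i, x ≠ partSize P i) :
    ((Fintype.card V + 1 : ℝ[X]) * partPoly P - X * derivative (partPoly P)).eval x =
      x ^ (Fintype.card V - Fintype.card ι) *
        ((∏ i, (x - partSize P i)) * (1 - ∑ i, (partSize P i : ℝ) / (x - partSize P i))) := by
  have hcard : Fintype.card ι ≤ Fintype.card V := Fintype.card_le_of_surjective P hP
  have hx' : ∀ i, x - partSize P i ≠ 0 := fun i => sub_ne_zero.mpr (hx i)
  have hd : (derivative (∏ i, (X - C (partSize P i : ℝ)))).eval x =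
      (∏ i, (x - partSize P i)) * ∑ i, 1 / (x - (partSize P i : ℝ)) := by
    rw [derivative_prod_finset, eval_finsetSum, Finset.mul_sum]
    refine Finset.sum_congr rfl fun i _ => ?_
    rw [← Finset.mul_prod_erase Finset.univ _ (Finset.mem_univ i)]
    have := hx' i
    simp [eval_prod]
    field_simp
  have hs : x * ∑ i, 1 / (x - (partSize P i : ℝ)) =
      Fintype.card ι + ∑ i, (partSize P i : ℝ) / (x - partSize P i) := by
    have : (Fintype.card ι : ℝ) = ∑ i : ι, 1 := by simp
    rw [this, Finset.mul_sum, ← Finset.sum_add_distrib]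
    refine Finset.sum_congr rfl fun i _ => ?_
    have := hx' i
    field_simp
    ring
  have hp : x * (derivative (X ^ (Fintype.card V - Fintype.card ι) : ℝ[X])).eval x =
      ((Fintype.card V : ℝ) - Fintype.card ι) * x ^ (Fintype.card V - Fintype.card ι) := by
    rw [← Nat.cast_sub hcard]
    generalize Fintype.card V - Fintype.card ι = m
    cases m with
    | zero => simp
    | succ m => rw [derivative_X_pow]; simp [pow_succ]; ring
  simp only [partPoly, derivative_mul, eval_sub, eval_mul, eval_add, eval_X, eval_natCast,
    eval_one, hd]
  rw [mul_add, ← mul_assoc x, hp]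
  simp only [eval_pow, eval_X, eval_prod, eval_sub, eval_C]
  linear_combination (-(x ^ (Fintype.card V - Fintype.card ι) * ∏ i, (x - (partSize P i : ℝ)))) * hs

theorem charpoly_multiMat {V ι : Type*} [Fintype V] [DecidableEq V] [Fintype ι]
    [DecidableEq ι] (P : V → ι) (hP : Function.Surjective P) :
    (multiMat P).charpoly =
      (Fintype.card V + 1 : ℝ[X]) * partPoly P - X * derivative (partPoly P) := by
  apply eq_of_infinite_eval_eq
  have hf : (insert (0 : ℝ) (Set.range fun i => (partSize P i : ℝ))).Finite :=
    (Set.finite_range _).insert _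
  refine hf.infinite_compl.mono fun x hx => ?_
  simp only [Set.mem_compl_iff, Set.mem_insert_iff, Set.mem_range, not_or, not_exists] at hx
  have h2 : ∀ i, x ≠ partSize P i := fun i h => hx.2 i h.symm
  rw [Set.mem_ofPred_eq, charpoly_multiMat_eval P hP x hx.1 h2, partPoly_eval P hP x hx.1 h2]

theorem partPoly_natDegree_le {V ι : Type*} [Fintype V] [Fintype ι]
    [DecidableEq ι] (P : V → ι) (hP : Function.Surjective P) :
    (partPoly P).natDegree ≤ Fintype.card V := by
  have hcard : Fintype.card ι ≤ Fintype.card V := Fintype.card_le_of_surjective P hP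
  unfold partPoly
  refine natDegree_mul_le.trans ?_
  rw [natDegree_X_pow, natDegree_prod_of_monic _ _ fun i _ => monic_X_sub_C _]
  simp only [natDegree_X_sub_C, Finset.sum_const, Finset.card_univ, smul_eq_mul, mul_one]
  omega

/-- Cancelling the operator `(n+1) - X d/dX` in degree at most `n`. -/
theorem poly_cancel (n : ℕ) (p q : ℝ[X]) (hp : p.natDegree ≤ n) (hq : q.natDegree ≤ n)
    (h : (n + 1 : ℝ[X]) * p - X * derivative p = (n + 1 : ℝ[X]) * q - X * derivative q) :
    p = q := by
  have key : ∀ (r : ℝ[X]) (j : ℕ),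
      ((n + 1 : ℝ[X]) * r - X * derivative r).coeff j = ((n : ℝ) + 1 - j) * r.coeff j := by
    intro r j
    have : (n + 1 : ℝ[X]) = C ((n : ℝ) + 1) := by simp
    rw [this, coeff_sub, coeff_C_mul]
    cases j with
    | zero => simp
    | succ j => rw [coeff_X_mul, coeff_derivative]; push_cast; ring
  ext j
  by_cases hj : j ≤ n
  · have := congrArg (fun r => r.coeff j) h
    simp only [key] at this
    have hj' : (j : ℝ) ≤ n := by exact_mod_cast hj
    exact mul_left_cancel₀ (by linarith) this
  · rw [coeff_eq_zero_of_natDegree_lt (by omega), coeff_eq_zero_of_natDegree_lt (by omega)]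

theorem partPoly_roots {V ι : Type*} [Fintype V] [Fintype ι]
    [DecidableEq ι] (P : V → ι) (hP : Function.Surjective P) :
    (partPoly P).roots.filter (· ≠ 0) =
      (Finset.univ.val.map (partSize P)).map (fun m : ℕ => (m : ℝ)) := by
  have h1 : (∏ i, (X - C (partSize P i : ℝ))) ≠ 0 :=
    (monic_prod_of_monic _ _ fun i _ => monic_X_sub_C _).ne_zero
  have h2 : (∏ i, (X - C (partSize P i : ℝ))).roots =
      (Finset.univ.val.map (partSize P)).map (fun m : ℕ => (m : ℝ)) := by
    rw [← roots_multiset_prod_X_sub_C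
      ((Finset.univ.val.map (partSize P)).map (fun m : ℕ => (m : ℝ)))]
    rw [Multiset.map_map, Multiset.map_map]
    rfl
  rw [partPoly, roots_mul (mul_ne_zero (pow_ne_zero _ X_ne_zero) h1), Multiset.filter_add, h2,
    roots_pow, roots_X]
  have h3 : Multiset.filter (· ≠ (0 : ℝ))
      ((Fintype.card V - Fintype.card ι) • ({0} : Multiset ℝ)) = 0 := by
    rw [Multiset.filter_eq_nil]
    intro a ha
    have := Multiset.mem_of_mem_nsmul ha
    simpa using this
  rw [h3, zero_add, Multiset.filter_eq_self]
  intro a ha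
  simp only [Multiset.mem_map] at ha
  obtain ⟨m, ⟨i, _, rfl⟩, rfl⟩ := ha
  obtain ⟨v, hv⟩ := hP i
  have : 0 < partSize P i := Finset.card_pos.mpr ⟨v, by simp [hv]⟩
  exact_mod_cast this.ne'

theorem exists_equiv_of_charpoly {V V' ι ι' : Type*} [Fintype V] [DecidableEq V] [Fintype V']
    [DecidableEq V'] [Fintype ι] [DecidableEq ι] [Fintype ι'] [DecidableEq ι']
    (P : V → ι) (hP : Function.Surjective P) (P' : V' → ι') (hP' : Function.Surjective P')
    (h : (multiMat P).charpoly = (multiMat P').charpoly) :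
    ∃ (e : V ≃ V') (s : ι ≃ ι'), ∀ v, P' (e v) = s (P v) := by
  have hn : Fintype.card V = Fintype.card V' := by
    have := congrArg natDegree h
    simpa using this
  have hpoly : partPoly P = partPoly P' := by
    apply poly_cancel (Fintype.card V) _ _ (partPoly_natDegree_le P hP)
    · rw [hn]; exact partPoly_natDegree_le P' hP'
    · rw [← charpoly_multiMat P hP, h, charpoly_multiMat P' hP', hn]
  have hms : Finset.univ.val.map (partSize P) = Finset.univ.val.map (partSize P') := by
    have := partPoly_roots P hP
    rw [hpoly, partPoly_roots P' hP'] at this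
    exact (Multiset.map_injective Nat.cast_injective this).symm
  have hcount : ∀ c : ℕ, Fintype.card {i // partSize P i = c} =
      Fintype.card {i // partSize P' i = c} := by
    intro c
    have := congrArg (Multiset.count c) hms
    rw [Multiset.count_map, Multiset.count_map] at this
    rw [Fintype.card_subtype, Fintype.card_subtype]
    simp only [Finset.card, Finset.filter_val]
    simpa [eq_comm] using this
  let s : ι ≃ ι' := Equiv.ofFiberEquiv (f := partSize P) (g := partSize P')
    fun c => Fintype.equivOfCardEq (hcount c)
  have hs : ∀ i, partSize P' (s i) = partSize P i := fun i => Equiv.ofFiberEquiv_map _ i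
  have hfib : ∀ j : ι', Fintype.card {v // s (P v) = j} = Fintype.card {v // P' v = j} := by
    intro j
    obtain ⟨i, rfl⟩ := s.surjective j
    have := hs i
    simp only [partSize] at this
    rw [Fintype.card_subtype, Fintype.card_subtype, this]
    simp
  let e : V ≃ V' := Equiv.ofFiberEquiv (f := fun v => s (P v)) (g := P')
    fun j => Fintype.equivOfCardEq (hfib j)
  exact ⟨e, s, fun v => Equiv.ofFiberEquiv_map (f := fun v => s (P v)) (g := P') _ v⟩

theorem charpoly_shift {V V' : Type*} [Fintype V] [DecidableEq V] [Fintype V']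
    [DecidableEq V'] (A : Matrix V V ℝ) (B : Matrix V' V' ℝ) (h : A.charpoly = B.charpoly) :
    (A + (2 : ℝ) • 1).charpoly = (B + (2 : ℝ) • 1).charpoly := by
  apply Polynomial.funext
  intro x
  have := congrArg (eval (x - 2)) h
  rw [Matrix.eval_charpoly, Matrix.eval_charpoly] at this ⊢
  have hA : Matrix.scalar V x - (A + (2 : ℝ) • 1) = Matrix.scalar V (x - 2) - A := by
    rw [map_sub]
    have : (2 : ℝ) • (1 : Matrix V V ℝ) = Matrix.scalar V 2 := by
      rw [Matrix.scalar_apply, Matrix.smul_one_eq_diagonal]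
    rw [this]; abel
  have hB : Matrix.scalar V' x - (B + (2 : ℝ) • 1) = Matrix.scalar V' (x - 2) - B := by
    rw [map_sub]
    have : (2 : ℝ) • (1 : Matrix V' V' ℝ) = Matrix.scalar V' 2 := by
      rw [Matrix.scalar_apply, Matrix.smul_one_eq_diagonal]
    rw [this]; abel
  rw [hA, hB, this]

theorem posSemidef_of_charpoly {V V' : Type*} [Fintype V] [DecidableEq V] [Fintype V']
    [DecidableEq V'] (A : Matrix V V ℝ) (B : Matrix V' V' ℝ) (h : A.charpoly = B.charpoly)
    (hA : A.PosSemidef) (hB : B.IsHermitian) : B.PosSemidef := by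
  rw [hB.posSemidef_iff_eigenvalues_nonneg]
  intro i
  have h1 := hB.roots_charpoly_eq_eigenvalues
  rw [← h, hA.1.roots_charpoly_eq_eigenvalues] at h1
  have h2 : hB.eigenvalues i ∈ Multiset.map (RCLike.ofReal ∘ hB.eigenvalues)
      (Finset.univ : Finset V').val := Multiset.mem_map.mpr ⟨i, by simp, by simp⟩
  rw [← h1] at h2
  obtain ⟨j, _, hj⟩ := Multiset.mem_map.mp h2
  rw [← hj]
  exact hA.eigenvalues_nonneg j

/-- Quadratic form on a difference of two basis vectors. -/
theorem quad_form {V : Type*} [Fintype V] [DecidableEq V] (B : Matrix V V ℝ) (u v : V) :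
    star (Pi.single u (1 : ℝ) - Pi.single v 1) ⬝ᵥ (B.mulVec (Pi.single u 1 - Pi.single v 1)) =
      B u u - B u v - B v u + B v v := by
  simp [Matrix.mulVec_sub, sub_dotProduct, dotProduct_sub]
  ring

theorem completeMultipartite_determined_by_distance_spectrum
    {V V' : Type*} [Fintype V] [DecidableEq V] [Fintype V'] [DecidableEq V']
    (G : SimpleGraph V) (G' : SimpleGraph V') (hG : G.Connected) (hG' : G'.Connected)
    (k : ℕ) (hk : 2 ≤ k) (P : V → Fin k) (hP : Function.Surjective P)
    (hadj : ∀ u v, G.Adj u v ↔ P u ≠ P v)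
    (hspec : (Matrix.of fun u v => (G.dist u v : ℝ)).charpoly =
      (Matrix.of fun u v => (G'.dist u v : ℝ)).charpoly) :
    Nonempty (G ≃g G') := by
  classical
  have hshift := charpoly_shift _ _ hspec
  have hM : (Matrix.of fun u v => (G.dist u v : ℝ)) + (2 : ℝ) • 1 = multiMat P := by
    ext u v
    simp only [multiMat, Matrix.add_apply, Matrix.of_apply, Matrix.smul_apply, Matrix.one_apply,
      smul_eq_mul]
    by_cases huv : u = v
    · subst huv; simp
    · by_cases hPuv : P u = P v
      · have hna : ¬ G.Adj u v := by rw [hadj]; simpa using hPuv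
        have : G.dist u v = 2 := by
          have h0 := hG.pos_dist_of_ne huv
          have h1 : G.dist u v ≠ 1 := fun h => hna (SimpleGraph.dist_eq_one_iff_adj.mp h)
          haveI : Nontrivial (Fin k) := Fin.nontrivial_iff_two_le.mpr hk
          obtain ⟨i, hi⟩ := exists_ne (P u)
          obtain ⟨w, rfl⟩ := hP i
          have a1 := SimpleGraph.dist_eq_one_iff_adj.mpr ((hadj u w).mpr hi.symm)
          have a2 := SimpleGraph.dist_eq_one_iff_adj.mpr ((hadj w v).mpr (hPuv ▸ hi))
          have := hG.dist_triangle (u := u) (v := w) (w := v)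
          omega
        simp [this, huv, hPuv]
      · have : G.dist u v = 1 := SimpleGraph.dist_eq_one_iff_adj.mpr ((hadj u v).mpr hPuv)
        simp [this, huv, hPuv]
  rw [hM] at hshift
  set B : Matrix V' V' ℝ := (Matrix.of fun u v => (G'.dist u v : ℝ)) + (2 : ℝ) • 1 with hB
  have hBdiag : ∀ u, B u u = 2 := fun u => by simp [hB]
  have hBoff : ∀ u v, u ≠ v → B u v = G'.dist u v := fun u v h => by simp [hB, h]
  have hBsymm : ∀ u v, B u v = B v u := by
    intro u v
    by_cases h : u = v
    · rw [h]
    · rw [hBoff u v h, hBoff v u (Ne.symm h), SimpleGraph.dist_comm]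
  have hBherm : B.IsHermitian := by
    ext u v
    simp [hBsymm u v]
  have hpsd := posSemidef_of_charpoly _ _ hshift (multiMat_posSemidef P) hBherm
  have hBval : ∀ u v, B u v = if G'.Adj u v then 1 else 2 := by
    intro u v
    by_cases h : u = v
    · subst h; simp [hBdiag]
    · by_cases ha : G'.Adj u v
      · rw [hBoff u v h, SimpleGraph.dist_eq_one_iff_adj.mpr ha]; simp [ha]
      · have h0 := hG'.pos_dist_of_ne h
        have h1 : G'.dist u v ≠ 1 := fun h => ha (SimpleGraph.dist_eq_one_iff_adj.mp h)
        have hq := hpsd.dotProduct_mulVec_nonneg (Pi.single u (1 : ℝ) - Pi.single v 1)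
        rw [quad_form, hBdiag, hBdiag, hBsymm v u, hBoff u v h] at hq
        have h2 : (G'.dist u v : ℝ) ≤ 2 := by linarith
        have h3 : G'.dist u v ≤ 2 := by exact_mod_cast h2
        have h4 : G'.dist u v = 2 := by omega
        rw [hBoff u v h, h4]; simp [ha]
  have hrow : ∀ u v, ¬ G'.Adj u v → ∀ w, B u w = B v w := by
    intro u v h w
    have hq := quad_form B u v
    rw [hBdiag, hBdiag, hBsymm v u, hBval u v, if_neg h,
      show (2 : ℝ) - 2 - 2 + 2 = 0 by norm_num] at hq
    have h0 := (hpsd.dotProduct_mulVec_zero_iff _).mp hq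
    have := congrFun h0 w
    rw [Matrix.mulVec_sub] at this
    simp at this
    rw [hBsymm u w, hBsymm v w]
    linarith
  let st : Setoid V' :=
    { r := fun u v => ¬ G'.Adj u v
      iseqv :=
        { refl := fun u => G'.irrefl
          symm := fun h h' => h h'.symm
          trans := by
            intro u v w h1 h2 h3
            have := hrow u v h1 w
            rw [hBval, hBval, if_pos h3, if_neg h2] at this
            norm_num at this } }
  let P' : V' → Quotient st := Quotient.mk st
  have hP' : Function.Surjective P' := Quotient.mk_surjective
  have hP'eq : ∀ u v, P' u = P' v ↔ ¬ G'.Adj u v := fun u v => Quotient.eq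
  have hM' : B = multiMat P' := by
    ext u v
    rw [hBval]
    simp only [multiMat, Matrix.of_apply, hP'eq]
    by_cases h : G'.Adj u v <;> simp [h]
  rw [hM'] at hshift
  obtain ⟨e, s, hes⟩ := exists_equiv_of_charpoly P hP P' hP' hshift
  refine ⟨⟨e, ?_⟩⟩
  intro u v
  rw [hadj, ← not_iff_not, ← hP'eq, hes, hes, s.injective.eq_iff, not_not]
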